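/- Let k be a perfect field of characteristic p > 2, let r ≥ 1 and m,n ≥ p^r, and let S := S(m|n,p^r), V := k^{m|n}, M₀, M₁ be as in the context. Let a,b ≥ 1 with a+b = p^r, and let T_{a,b} := V^{⊗p^r} / span{ z − z·σ : z ∈ V^{⊗p^r}, σ ∈ 𝔖_a × 𝔖_b }, the coinvariants of V^{⊗p^r} for the signed action of the Young subgroup 𝔖_a × 𝔖_b ⊆ 𝔖_{p^r} (so T_{a,b} ≅ 𝐒^a(V) ⊗ 𝐒^b(V)); T_{a,b} is an S-module. Then Ext^s_S(M_ℓ, T_{a,b}) = 0 for every s ≥ 0 and every ℓ ∈ {0,1}. -/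

import Mathlib

open CategoryTheory Finset

set_option synthInstance.maxHeartbeats 1000000
set_option maxHeartbeats 4000000

namespace Stmt12

variable (k : Type) [Field k]

/-- index set for the standard homogeneous basis of the superspace `k^{m|n}` -/
abbrev BIdx (m n : ℕ) := Fin m ⊕ Fin n

/-- parity of a standard basis vector of `k^{m|n}` (`false` = even, `true` = odd) -/
def bpar {m n : ℕ} : BIdx m n → Bool := Sum.elim (fun _ => false) (fun _ => true)

/-- the `d`-th tensor power `(k^{m|n})^{⊗d}`, modelled on its standard monomial basis -/
def W (m n d : ℕ) : Type := (Fin d → BIdx m n) → k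

instance (m n d : ℕ) : AddCommGroup (W k m n d) :=
  inferInstanceAs (AddCommGroup ((Fin d → BIdx m n) → k))

instance (m n d : ℕ) : Module k (W k m n d) :=
  inferInstanceAs (Module k ((Fin d → BIdx m n) → k))

/-- the number of inversions of the permutation `σ` in which both entries involved are
odd, for a tensor whose `i`-th slot has parity `ε i`; the Koszul sign is `(-1)` to this count -/
def signExp {d : ℕ} (σ : Equiv.Perm (Fin d)) (ε : Fin d → Bool) : ℕ :=
  ((univ ×ˢ univ).filter fun q : Fin d × Fin d =>
    q.1 < q.2 ∧ σ q.2 < σ q.1 ∧ ε (σ q.1) = true ∧ ε (σ q.2) = true).card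

/-- the signed (right) permutation action of `σ ∈ 𝔖_d` on `(k^{m|n})^{⊗d}`:
on a basis tensor, the transposition `(i, i+1)` acts by exchanging the `i`-th and `(i+1)`-th
factors and multiplying by `(-1)` if both are odd -/
def act {m n d : ℕ} (σ : Equiv.Perm (Fin d)) : W k m n d →ₗ[k] W k m n d where
  toFun x := fun g => (-1 : k) ^ signExp σ (fun i => bpar (g (σ⁻¹ i))) * x (g ∘ ⇑σ⁻¹)
  map_add' x y := funext fun g => mul_add _ _ _
  map_smul' c x := funext fun g => mul_left_comm _ _ _

/-- the Schur superalgebra `S(m|n, d) = End_{k𝔖_d}((k^{m|n})^{⊗d})`, i.e. the algebra of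
`k`-linear endomorphisms of `(k^{m|n})^{⊗d}` commuting with the signed `𝔖_d`-action -/
def Schur (m n d : ℕ) : Subalgebra k (Module.End k (W k m n d)) :=
  Subalgebra.centralizer k (Set.range (act k (m := m) (n := n) (d := d)))

/-- the Schur superalgebra, as a type -/
def SAlg (m n d : ℕ) : Type := Schur k m n d

instance (m n d : ℕ) : Ring (SAlg k m n d) :=
  inferInstanceAs (Ring (Schur k m n d))

instance (m n d : ℕ) : Algebra k (SAlg k m n d) :=
  inferInstanceAs (Algebra k (Schur k m n d))

instance (m n d : ℕ) : Module (SAlg k m n d) (W k m n d) :=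
  Module.compHom _ (Subalgebra.val (Schur k m n d)).toRingHom

variable (m n d : ℕ)

/-- the pure tensor `v 0 ⊗ v 1 ⊗ ⋯ ⊗ v (d-1)` in `(k^{m|n})^{⊗d}` -/
def ptensor (v : Fin d → (BIdx m n → k)) : W k m n d := fun f => ∏ i, v i (f i)

/-- the pure tensor power `v^{⊗d}` -/
def tpow (v : BIdx m n → k) : W k m n d := ptensor k m n d (fun _ => v)

/-- a vector of `k^{m|n}` is even if it lies in `k^m = (k^{m|n})₀` -/
def IsEven {m n : ℕ} (v : BIdx m n → k) : Prop := ∀ j : Fin n, v (Sum.inr j) = 0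

/-- a vector of `k^{m|n}` is odd if it lies in `k^n = (k^{m|n})₁` -/
def IsOdd {m n : ℕ} (v : BIdx m n → k) : Prop := ∀ i : Fin m, v (Sum.inl i) = 0

/-- the relations `z - z·σ` defining the coinvariant space `𝐒^d(k^{m|n})` -/
def symRel : Submodule (SAlg k m n d) (W k m n d) :=
  Submodule.span _ {x | ∃ (z : W k m n d) (σ : Equiv.Perm (Fin d)), x = z - act k σ z}

/-- the coinvariant space `𝐒^d(k^{m|n})` -/
def SymQ : Type := W k m n d ⧸ symRel k m n d

instance : AddCommGroup (SymQ k m n d) :=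
  inferInstanceAs (AddCommGroup (W k m n d ⧸ symRel k m n d))

instance : Module (SAlg k m n d) (SymQ k m n d) :=
  inferInstanceAs (Module (SAlg k m n d) (W k m n d ⧸ symRel k m n d))

/-- the class of a tensor `z` in `𝐒^d(k^{m|n})`; for `z = v^{⊗d}` this is `v^d` -/
def symMk (z : W k m n d) : SymQ k m n d :=
  Submodule.Quotient.mk z

/-- `M₀`: the span of the `d`-th powers `v^d` of even vectors `v`, inside `𝐒^d(k^{m|n})`;
this is the evaluation at `k^{m|n}` of the Frobenius twist functor `I₀^{(r)}` when `d = p^r` -/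
def M0 : Submodule (SAlg k m n d) (SymQ k m n d) :=
  Submodule.span _ {x | ∃ v, IsEven k v ∧ x = symMk k m n d (tpow k m n d v)}

/-- `M₁`: the span of the tensor powers `y^{⊗d}` of odd vectors `y`, inside `(k^{m|n})^{⊗d}`;
this is the evaluation at `k^{m|n}` of the Frobenius twist functor `I₁^{(r)}` when `d = p^r` -/
def M1 : Submodule (SAlg k m n d) (W k m n d) :=
  Submodule.span _ {x | ∃ v, IsOdd k v ∧ x = tpow k m n d v}

/-- the category of left modules over the Schur superalgebra `S(m|n,d)` -/
abbrev SMod := ModuleCat.{0} (SAlg k m n d)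

/-- `M₀` as an object of the module category of `S(m|n,d)` -/
noncomputable abbrev M0cat : SMod k m n d := ModuleCat.of _ (M0 k m n d)

/-- `M₁` as an object of the module category of `S(m|n,d)` -/
noncomputable abbrev M1cat : SMod k m n d := ModuleCat.of _ (M1 k m n d)

noncomputable instance : HasDerivedCategory.{1} (ModuleCat.{0} (SAlg k m n d)) :=
  HasDerivedCategory.standard _

instance : HasExt.{1} (ModuleCat.{0} (SAlg k m n d)) :=
  CategoryTheory.hasExt_of_hasDerivedCategory _

open Abelian in
lemma Ext_mk₀_add {X Y : SMod k m n d} (f g : X ⟶ Y) :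
    Ext.mk₀ (f + g) = Ext.mk₀ f + Ext.mk₀ g := by
  apply Ext.ext
  rw [Ext.add_hom, Ext.mk₀_hom, Ext.mk₀_hom, Ext.mk₀_hom, Functor.map_add]
  simp [ShiftedHom.mk₀, Preadditive.add_comp]

open Abelian in
/-- the `k`-vector space structure on the Ext-groups for the Schur superalgebra, where
`c • x` is the Yoneda composite of `x` with `c • 𝟙` -/
noncomputable instance extModule (X Y : SMod k m n d) (N : ℕ) :
    Module k (Ext X Y N) where
  smul c x := (Ext.mk₀ (c • 𝟙 X)).comp x (zero_add N)
  one_smul x := by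
    show (Ext.mk₀ ((1 : k) • 𝟙 X)).comp x (zero_add N) = x
    rw [one_smul]
    exact Ext.mk₀_id_comp x
  mul_smul a b x := by
    show (Ext.mk₀ ((a * b) • 𝟙 X)).comp x (zero_add N) =
      (Ext.mk₀ (a • 𝟙 X)).comp ((Ext.mk₀ (b • 𝟙 X)).comp x (zero_add N)) (zero_add N)
    rw [Ext.mk₀_comp_mk₀_assoc (a • 𝟙 X) (b • 𝟙 X) x]
    congr 2
    simp [smul_smul, mul_comm a b]
  smul_zero a := Ext.comp_zero _ _ _ _ _
  smul_add a x y := Ext.comp_add _ _ _ _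
  add_smul a b x := by
    show (Ext.mk₀ ((a + b) • 𝟙 X)).comp x (zero_add N) =
      (Ext.mk₀ (a • 𝟙 X)).comp x (zero_add N) + (Ext.mk₀ (b • 𝟙 X)).comp x (zero_add N)
    rw [add_smul, Ext_mk₀_add, Ext.add_comp]
  zero_smul x := by
    show (Ext.mk₀ ((0 : k) • 𝟙 X)).comp x (zero_add N) = 0
    rw [zero_smul, Ext.mk₀_zero, Ext.zero_comp]

end Stmt12

namespace Stmt12

open CategoryTheory Abelian

variable (k : Type) [Field k] (m n d : ℕ)

/-- membership in the Young subgroup `𝔖_a × 𝔖_b` of `𝔖_d` (where `d = a + b`):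
a permutation lies in it iff it preserves the first block `{0, …, a-1}` -/
def InYoung (a : ℕ) (σ : Equiv.Perm (Fin d)) : Prop :=
  ∀ i : Fin d, ((σ i : ℕ) < a ↔ (i : ℕ) < a)

/-- the relations `z - z·σ`, `σ ∈ 𝔖_a × 𝔖_b`, defining the coinvariants
`T_{a,b} ≅ 𝐒^a(k^{m|n}) ⊗ 𝐒^b(k^{m|n})` -/
def youngRel (a : ℕ) : Submodule (SAlg k m n d) (W k m n d) :=
  Submodule.span _ {x | ∃ (z : W k m n d) (σ : Equiv.Perm (Fin d)),
    InYoung d a σ ∧ x = z - act k σ z}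

/-- the coinvariant space `T_{a,b}` of `(k^{m|n})^{⊗d}` for the signed action of the
Young subgroup `𝔖_a × 𝔖_b ⊆ 𝔖_d` -/
def YoungQ (a : ℕ) : Type := W k m n d ⧸ youngRel k m n d a

instance (a : ℕ) : AddCommGroup (YoungQ k m n d a) :=
  inferInstanceAs (AddCommGroup (W k m n d ⧸ youngRel k m n d a))

instance (a : ℕ) : Module (SAlg k m n d) (YoungQ k m n d a) :=
  inferInstanceAs (Module (SAlg k m n d) (W k m n d ⧸ youngRel k m n d a))

/-- `T_{a,b}` as an object of the module category of `S(m|n,d)` -/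
noncomputable abbrev YoungQcat (a : ℕ) : SMod k m n d := ModuleCat.of _ (YoungQ k m n d a)

/-! Let `e ∈ S` be the weight idempotent of a word `w` with two distinct even letters, `a` times
the first one and `b` times the second; the stabilizer of `w` in `𝔖_d` is `𝔖_a × 𝔖_b`. Reading off
the coefficient at `w` identifies `T_{a,b}` with the `k`-linear dual of the right ideal `e S`, so
that `Hom_S(X, T_{a,b})` is the dual of `e X`, naturally in `X`. Since `X ↦ e X` is exact, `T_{a,b}`
is injective, and all the Ext groups vanish as soon as `e X = 0`.

Elements of `M₀` are classes of symmetric tensors, for which `e z` is a multiple of the sum of the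
words in the orbit of `w`; the `d.choose a` words of this orbit have the same class in the
coinvariants, and `p` divides `d.choose a` when `d = p ^ r`. Elements of `M₁` are antisymmetric
tensors, whose coefficient at a word with a repeated even letter is its own negative. -/

section DualOfRightIdeal

variable {K A T : Type*} [Field K] [Ring A] [AddCommGroup T] [Module A T] [Module K T]

/-- The functional `ξ` exhibits the `A`-module `T` as the `K`-linear dual of the right ideal `e A`:
the pairing `e A × T → K`, `(e a, t) ↦ ξ (a t)`, is well defined and perfect. For `e` a weight
idempotent of a Schur algebra, `ξ` reads off a coordinate of the corresponding weight. -/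
structure IsDualOfRightIdeal (e : A) (ξ : Module.Dual K T) : Prop where
  apply_smul : ∀ t, ξ (e • t) = ξ t
  exists_apply_smul_eq : ∀ h : Module.Dual K T, ∃ a : A, ∀ t, ξ (a • t) = h t
  mul_eq_zero : ∀ a : A, (∀ t, ξ (a • t) = 0) → e * a = 0

namespace IsDualOfRightIdeal

variable {e : A} {ξ : Module.Dual K T} {X Y : Type*} [AddCommGroup X] [Module A X]

theorem hom_ext (hξ : IsDualOfRightIdeal e ξ) {φ ψ : X →ₗ[A] T}
    (h : ∀ x, ξ (φ x) = ξ (ψ x)) : φ = ψ := by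
  ext x
  refine sub_eq_zero.1 ((Module.forall_dual_apply_eq_zero_iff K (φ x - ψ x)).1 fun f => ?_)
  obtain ⟨a, ha⟩ := hξ.exists_apply_smul_eq f
  rw [← ha, smul_sub, map_sub, ← map_smul, ← map_smul, h, sub_self]

theorem hom_eq_zero (hξ : IsDualOfRightIdeal e ξ) (hX : ∀ x : X, e • x = 0)
    (φ : X →ₗ[A] T) : φ = 0 :=
  hξ.hom_ext fun x => by
    rw [← hξ.apply_smul, ← map_smul, hX, map_zero, LinearMap.zero_apply]

theorem mul_eq_mul (hξ : IsDualOfRightIdeal e ξ) {a b : A}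
    (h : ∀ t, ξ (a • t) = ξ (b • t)) : e * a = e * b := by
  rw [← sub_eq_zero, ← mul_sub]
  exact hξ.mul_eq_zero _ fun t => by rw [sub_smul, map_sub, h, sub_self]

variable [Algebra K A] [IsScalarTower K A T]

theorem exists_linearMap_mul_eq (hξ : IsDualOfRightIdeal e ξ) :
    ∃ s : Module.Dual K T →ₗ[K] A, (∀ h t, ξ (s h • t) = h t) ∧
      ∀ h h' c, (∀ t, h (c • t) = h' t) → e * s h * c = e * s h' := by
  let pairing : A →ₗ[K] Module.Dual K T :=
    LinearMap.mk₂ K (fun a t => ξ (a • t)) (by simp [add_smul]) (by simp) (by simp)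
      (fun c a t => by rw [smul_algebra_smul_comm, map_smul])
  obtain ⟨s, hs⟩ := pairing.exists_rightInverse_of_surjective <|
    LinearMap.range_eq_top.2 fun h => (hξ.exists_apply_smul_eq h).imp fun a => LinearMap.ext
  have apply_s (h t) : ξ (s h • t) = h t := LinearMap.congr_fun (LinearMap.congr_fun hs h) t
  refine ⟨s, apply_s, fun h h' c hc => ?_⟩
  rw [mul_assoc]
  exact hξ.mul_eq_mul fun t => by rw [mul_smul, apply_s, apply_s, hc]

variable [FiniteDimensional K T]

theorem exists_hom [AddCommGroup Y] [Module A Y] [Module K Y] [IsScalarTower K A Y]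
    (hξ : IsDualOfRightIdeal e ξ) (η : Module.Dual K Y) :
    ∃ Φ : Y →ₗ[A] T, ∀ y, ξ (Φ y) = η (e • y) := by
  obtain ⟨s, apply_s, mul_s⟩ := hξ.exists_linearMap_mul_eq
  -- `Φ` is `G` followed by `T** ≃ T`; a functional `h` on `T` corresponds to `e * s h` in `e A`
  let G : Y →ₗ[K] Module.Dual K (Module.Dual K T) :=
    LinearMap.mk₂ K (fun y h => η ((e * s h) • y)) (by simp)
      (fun c y h => by rw [smul_algebra_smul_comm, map_smul])
      (by simp [mul_add, add_smul]) (by simp)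
  have apply_G (h : Module.Dual K T) (y) :
      h ((Module.evalEquiv K T).symm (G y)) = η ((e * s h) • y) := by
    rw [Module.apply_evalEquiv_symm_apply]
    rfl
  refine ⟨⟨⟨fun y => (Module.evalEquiv K T).symm (G y), by simp⟩, fun c y => ?_⟩, fun y => ?_⟩
  · refine Module.eval_apply_injective K (LinearMap.ext fun h => ?_)
    simp only [RingHom.id_apply, Module.Dual.eval_apply, apply_G]
    let h' : Module.Dual K T := h ∘ₗ Algebra.lsmul K K T c
    calc η ((e * s h) • c • y) = η ((e * s h') • y) := by
          rw [smul_smul, mul_s h h' c fun t => rfl]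
      _ = h (c • (Module.evalEquiv K T).symm (G y)) := (apply_G h' y).symm
  · have mul_s_self : e * s ξ = e * 1 :=
      hξ.mul_eq_mul fun t => by rw [apply_s, one_smul]
    exact (apply_G ξ y).trans (by rw [mul_s_self, mul_one])

theorem injective (hξ : IsDualOfRightIdeal e ξ) : Module.Injective A T where
  out X Y _ _ _ _ f hf g := by
    let : Module K X := Module.compHom X (algebraMap K A)
    let : Module K Y := Module.compHom Y (algebraMap K A)
    have : IsScalarTower K A X := IsScalarTower.of_algebraMap_smul fun _ _ => rfl
    have : IsScalarTower K A Y := IsScalarTower.of_algebraMap_smul fun _ _ => rfl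
    obtain ⟨l, hl⟩ := (f.restrictScalars K).exists_leftInverse_of_injective
      (LinearMap.ker_eq_bot.2 hf)
    obtain ⟨Φ, hΦ⟩ := hξ.exists_hom (ξ ∘ₗ g.restrictScalars K ∘ₗ l)
    refine ⟨Φ, LinearMap.congr_fun (hξ.hom_ext (φ := Φ ∘ₗ f) fun x => ?_)⟩
    have l_apply : l (f (e • x)) = e • x := LinearMap.congr_fun hl (e • x)
    calc ξ (Φ (f x)) = ξ (g (l (f (e • x)))) := by rw [hΦ, ← map_smul]; rfl
      _ = ξ (g x) := by rw [l_apply, map_smul, hξ.apply_smul]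

end IsDualOfRightIdeal

end DualOfRightIdeal

theorem subsingleton_ext_of_injective {C : Type*} [Category* C] [Abelian C] [HasExt C]
    {X I : C} [Injective I] (h : ∀ f : X ⟶ I, f = 0) : ∀ s, Subsingleton (Ext X I s)
  | 0 => Ext.homEquiv₀.subsingleton_congr.2 <| subsingleton_of_forall_eq 0 h
  | s + 1 => Ext.subsingleton_of_injective X I s

section KoszulSign

variable {d}

/-- The indicator function, on unordered pairs of slots, of the inversions of `σ` counted by
`signExp σ ε`. Since the condition is symmetric, a permutation of the slots merely reindexes sums
over all unordered pairs. -/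
def oddInversion (σ : Equiv.Perm (Fin d)) (ε : Fin d → Bool) : Sym2 (Fin d) → ℕ :=
  Sym2.lift ⟨fun i j => if ε (σ i) ∧ ε (σ j) ∧ ¬(i < j ↔ σ i < σ j) then 1 else 0, fun i j => by
    grind [σ.injective.eq_iff]⟩

theorem oddInversion_mk (σ : Equiv.Perm (Fin d)) (ε : Fin d → Bool) (i j : Fin d) :
    oddInversion σ ε s(i, j) =
      if ε (σ i) ∧ ε (σ j) ∧ ¬(i < j ↔ σ i < σ j) then 1 else 0 :=
  rfl

theorem signExp_eq_sum_oddInversion (σ : Equiv.Perm (Fin d)) (ε : Fin d → Bool) :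
    signExp σ ε = ∑ z, oddInversion σ ε z := by
  have not_isDiag : ∀ z, oddInversion σ ε z ≠ 0 → ¬z.IsDiag := by
    refine Sym2.ind fun i j h => ?_
    rw [Sym2.mk_isDiag_iff]
    rintro rfl
    simp [oddInversion_mk] at h
  rw [← Finset.sum_filter_of_ne fun z _ => not_isDiag z, ← Finset.sym2_univ,
    Finset.sum_sym2_filter_not_isDiag, signExp]
  simp only [oddInversion_mk]
  rw [← Finset.card_filter, Finset.filter_filter]
  congr 1
  ext ⟨i, j⟩
  simp only [Finset.mem_filter, Finset.mem_product, Finset.mem_offDiag, Finset.mem_univ, true_and]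
  grind [σ.injective.eq_iff]

theorem neg_one_pow_signExp_mul (R : Type*) [CommRing R] (σ τ : Equiv.Perm (Fin d))
    (ε : Fin d → Bool) :
    (-1 : R) ^ signExp (τ * σ) ε = (-1) ^ signExp σ (ε ∘ τ) * (-1) ^ signExp τ ε := by
  have reindex : ∑ z, oddInversion τ ε z = ∑ z, oddInversion τ ε (Sym2.map σ z) :=
    (Finset.univ.sum_equiv (Equiv.ofBijective (Sym2.map σ)
      (Finite.injective_iff_bijective.1 (Sym2.map.injective σ.injective)))
      (by simp) (fun z _ => rfl)).symm
  simp only [signExp_eq_sum_oddInversion, reindex, ← Finset.prod_pow_eq_pow_sum,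
    ← Finset.prod_mul_distrib]
  -- a pair of odd slots is inverted by `τ * σ` iff exactly one of the two steps inverts it
  refine Finset.prod_congr rfl fun z _ => z.ind fun i j => ?_
  simp only [Sym2.map_mk, oddInversion_mk, Equiv.Perm.mul_apply, Function.comp_apply]
  by_cases hi : ε (τ (σ i)) <;> by_cases hj : ε (τ (σ j)) <;> by_cases hij : i < j <;>
    by_cases hσ : σ i < σ j <;> by_cases hτ : τ (σ i) < τ (σ j) <;> simp [*]

theorem neg_one_pow_signExp_true (R : Type*) [CommRing R] (σ : Equiv.Perm (Fin d)) :
    (-1 : R) ^ signExp σ (fun _ => true) = (Equiv.Perm.sign σ : ℤ) := by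
  rw [Equiv.Perm.sign_eq_prod_prod_Ioi, signExp, ← Finset.prod_const, Finset.prod_filter,
    Finset.prod_product]
  push_cast
  refine Finset.prod_congr rfl fun i _ => ?_
  rw [← Finset.filter_lt_eq_Ioi, Finset.prod_filter]
  refine Finset.prod_congr rfl fun j _ => ?_
  by_cases hij : i < j
  · rcases (σ.injective.ne hij.ne).lt_or_gt with h | h <;> simp [hij, h, h.not_gt]
  · simp [hij]

end KoszulSign

section SignedAction

variable {k m n d}

variable (k) in
/-- The coefficient at the basis word `f`, as a linear functional on the tensor space. -/
def wordCoeff (f : Fin d → BIdx m n) : Module.Dual k (W k m n d) :=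
  LinearMap.proj f

theorem ext_wordCoeff {y z : W k m n d} (h : ∀ f, wordCoeff k f y = wordCoeff k f z) : y = z :=
  funext h

theorem wordCoeff_act (f : Fin d → BIdx m n) (σ : Equiv.Perm (Fin d)) (z : W k m n d) :
    wordCoeff k f (act k σ z) =
      (-1) ^ signExp σ (fun i => bpar (f (σ⁻¹ i))) * wordCoeff k (f ∘ ⇑σ⁻¹) z :=
  rfl

theorem act_act (σ τ : Equiv.Perm (Fin d)) (z : W k m n d) :
    act k σ (act k τ z) = act k (τ * σ) z := by
  refine ext_wordCoeff fun f => ?_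
  have conj_apply (i) : (τ * σ)⁻¹ (τ i) = σ⁻¹ i := by simp
  simp only [wordCoeff_act, neg_one_pow_signExp_mul k σ τ, Function.comp_def, conj_apply,
    mul_assoc]
  simp only [mul_inv_rev, Equiv.Perm.mul_apply]

theorem smul_act (c : SAlg k m n d) (σ : Equiv.Perm (Fin d)) (z : W k m n d) :
    c • act k σ z = act k σ (c • z) :=
  (LinearMap.congr_fun (c.2 (act k σ) ⟨σ, rfl⟩) z).symm

theorem wordCoeff_act_of_even {f : Fin d → BIdx m n} (hf : ∀ i, bpar (f i) = false)
    (σ : Equiv.Perm (Fin d)) (z : W k m n d) :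
    wordCoeff k f (act k σ z) = wordCoeff k (f ∘ ⇑σ⁻¹) z := by
  simp [wordCoeff_act, hf, signExp]

theorem wordCoeff_comp_tpow (f : Fin d → BIdx m n) (σ : Equiv.Perm (Fin d)) (v : BIdx m n → k) :
    wordCoeff k (f ∘ σ) (tpow k m n d v) = wordCoeff k f (tpow k m n d v) :=
  Equiv.prod_comp σ fun i => v (f i)

theorem wordCoeff_tpow_eq_zero {f : Fin d → BIdx m n} {v : BIdx m n → k} {i : Fin d}
    (h : v (f i) = 0) : wordCoeff k f (tpow k m n d v) = 0 :=
  Finset.prod_eq_zero (Finset.mem_univ i) h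

theorem act_tpow_of_isEven {v : BIdx m n → k} (hv : IsEven k v) (σ : Equiv.Perm (Fin d)) :
    act k σ (tpow k m n d v) = tpow k m n d v := by
  refine ext_wordCoeff fun f => ?_
  rw [wordCoeff_act, wordCoeff_comp_tpow]
  by_cases hf : ∃ i j, f i = Sum.inr j
  · obtain ⟨i, j, hij⟩ := hf
    rw [wordCoeff_tpow_eq_zero (i := i) (by rw [hij, hv]), mul_zero]
  · have even (i) : bpar (f i) = false := by
      rcases h : f i with j | j
      exacts [rfl, (hf ⟨i, j, h⟩).elim]
    simp [signExp, even]

theorem act_tpow_of_isOdd {v : BIdx m n → k} (hv : IsOdd k v) (σ : Equiv.Perm (Fin d)) :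
    act k σ (tpow k m n d v) = ((Equiv.Perm.sign σ : ℤ) : k) • tpow k m n d v := by
  refine ext_wordCoeff fun f => ?_
  rw [wordCoeff_act, wordCoeff_comp_tpow, map_smul, smul_eq_mul, ← neg_one_pow_signExp_true]
  by_cases hf : ∃ i j, f i = Sum.inl j
  · obtain ⟨i, j, hij⟩ := hf
    rw [wordCoeff_tpow_eq_zero (i := i) (by rw [hij, hv]), mul_zero, mul_zero]
  · have odd (i) : bpar (f i) = true := by
      rcases h : f i with j | j
      exacts [(hf ⟨i, j, h⟩).elim, rfl]
    simp only [odd]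

/-- The element of the Schur superalgebra whose matrix has the functional `L f` as its row at the
basis word `f`; the hypothesis says that this operator commutes with the signed action. -/
def SAlg.ofRows (L : (Fin d → BIdx m n) → Module.Dual k (W k m n d))
    (hL : ∀ σ f z, L f (act k σ z) =
      (-1) ^ signExp σ (fun i => bpar (f (σ⁻¹ i))) * L (f ∘ ⇑σ⁻¹) z) : SAlg k m n d :=
  ⟨LinearMap.pi L, by
    rintro _ ⟨σ, rfl⟩
    exact LinearMap.ext fun z => funext fun f => (hL σ f z).symm⟩

theorem SAlg.wordCoeff_ofRows_smul {L : (Fin d → BIdx m n) → Module.Dual k (W k m n d)}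
    (hL : ∀ σ f z, L f (act k σ z) =
      (-1) ^ signExp σ (fun i => bpar (f (σ⁻¹ i))) * L (f ∘ ⇑σ⁻¹) z)
    (z : W k m n d) (f : Fin d → BIdx m n) :
    wordCoeff k f (SAlg.ofRows L hL • z) = L f z :=
  rfl

theorem SAlg.ext_smul {a b : SAlg k m n d} (h : ∀ z : W k m n d, a • z = b • z) : a = b :=
  Subtype.ext <| LinearMap.ext h

end SignedAction

section WeightSpace

variable {k m n d}

instance : IsScalarTower k (SAlg k m n d) (W k m n d) :=
  IsScalarTower.of_algebraMap_smul fun _ _ => rfl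

instance : FiniteDimensional k (W k m n d) :=
  inferInstanceAs (FiniteDimensional k ((Fin d → BIdx m n) → k))

/-- The basis words of the same weight as `w`: those obtained from `w` by permuting the slots. -/
def wordOrbit (w : Fin d → BIdx m n) : Finset (Fin d → BIdx m n) :=
  Finset.univ.image fun τ : Equiv.Perm (Fin d) => w ∘ τ

theorem mem_wordOrbit {w f : Fin d → BIdx m n} :
    f ∈ wordOrbit w ↔ ∃ τ : Equiv.Perm (Fin d), w ∘ τ = f := by
  simp [wordOrbit]

theorem self_mem_wordOrbit (w : Fin d → BIdx m n) : w ∈ wordOrbit w :=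
  mem_wordOrbit.2 ⟨1, rfl⟩

theorem comp_mem_wordOrbit {w f : Fin d → BIdx m n} (σ : Equiv.Perm (Fin d)) :
    f ∘ σ ∈ wordOrbit w ↔ f ∈ wordOrbit w := by
  simp only [mem_wordOrbit]
  constructor
  · rintro ⟨τ, hτ⟩
    exact ⟨τ * σ⁻¹, (σ.comp_symm_eq f (w ∘ τ)).2 hτ⟩
  · rintro ⟨τ, rfl⟩
    exact ⟨τ * σ, rfl⟩

variable (k) in
/-- The weight idempotent of the Schur superalgebra: the projection of the tensor space onto the
weight space of `w`. -/
def weightIdem (w : Fin d → BIdx m n) : SAlg k m n d :=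
  SAlg.ofRows (fun f => if f ∈ wordOrbit w then wordCoeff k f else 0) fun σ f z => by
    simp only [comp_mem_wordOrbit]
    split_ifs
    exacts [rfl, (mul_zero _).symm]

theorem wordCoeff_weightIdem_smul (w f : Fin d → BIdx m n) (z : W k m n d) :
    wordCoeff k f (weightIdem k w • z) = if f ∈ wordOrbit w then wordCoeff k f z else 0 := by
  rw [weightIdem, SAlg.wordCoeff_ofRows_smul]
  split_ifs <;> rfl

variable (k) in
/-- The relations defining the coinvariants of the tensor space for the signed action of the
stabilizer of the word `w`, a Young subgroup. -/
def wordRel (w : Fin d → BIdx m n) : Submodule (SAlg k m n d) (W k m n d) :=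
  Submodule.span _ {x | ∃ (z : W k m n d) (σ : Equiv.Perm (Fin d)), w ∘ σ = w ∧ x = z - act k σ z}

theorem mkQ_wordRel_act_of_comp_eq {w : Fin d → BIdx m n} {σ : Equiv.Perm (Fin d)}
    (h : w ∘ σ = w) (z : W k m n d) :
    (wordRel k w).mkQ (act k σ z) = (wordRel k w).mkQ z :=
  ((Submodule.Quotient.eq (wordRel k w)).2 (Submodule.subset_span ⟨z, σ, h, rfl⟩)).symm

theorem wordCoeff_act_inv {w f : Fin d → BIdx m n} (hw : ∀ i, bpar (w i) = false)
    {τ : Equiv.Perm (Fin d)} (hτ : w ∘ τ = f) (z : W k m n d) :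
    wordCoeff k w (act k τ⁻¹ z) = wordCoeff k f z := by
  rw [wordCoeff_act_of_even hw, inv_inv, hτ]

theorem wordCoeff_eq_zero_of_mem_wordRel {w : Fin d → BIdx m n} (hw : ∀ i, bpar (w i) = false)
    {x : W k m n d} (hx : x ∈ wordRel k w) : wordCoeff k w x = 0 := by
  induction hx using Submodule.closure_induction with
  | zero => rfl
  | add x y _ _ hx hy => rw [map_add, hx, hy, add_zero]
  | smul_mem c x hx =>
    obtain ⟨z, σ, hσ, rfl⟩ := hx
    have inv_comp : w ∘ ⇑σ⁻¹ = w := (σ.comp_symm_eq w w).2 hσ.symm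
    rw [smul_sub, smul_act, map_sub, wordCoeff_act_of_even hw, inv_comp, sub_self]

/-- The coefficient at an even word `w`, as a functional on the coinvariants of its stabilizer. -/
def weightFunctional {w : Fin d → BIdx m n} (hw : ∀ i, bpar (w i) = false) :
    Module.Dual k (W k m n d ⧸ wordRel k w) :=
  ((wordRel k w).restrictScalars k).liftQ (wordCoeff k w)
      (fun _ hx => wordCoeff_eq_zero_of_mem_wordRel hw hx) ∘ₗ
    (Submodule.Quotient.restrictScalarsEquiv k (wordRel k w)).symm.toLinearMap

theorem weightFunctional_mkQ {w : Fin d → BIdx m n} (hw : ∀ i, bpar (w i) = false)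
    (z : W k m n d) : weightFunctional hw ((wordRel k w).mkQ z) = wordCoeff k w z :=
  rfl

theorem exists_smul_wordCoeff_eq {w : Fin d → BIdx m n} (hw : ∀ i, bpar (w i) = false)
    (h : Module.Dual k (W k m n d ⧸ wordRel k w)) :
    ∃ a : SAlg k m n d, ∀ z : W k m n d, wordCoeff k w (a • z) = h ((wordRel k w).mkQ z) := by
  choose! τ hτ using fun f : Fin d → BIdx m n => (mem_wordOrbit (w := w) (f := f)).1
  let row (f : Fin d → BIdx m n) : Module.Dual k (W k m n d) :=
    if f ∈ wordOrbit w then h ∘ₗ (wordRel k w).mkQ.restrictScalars k ∘ₗ act k (τ f)⁻¹ else 0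
  have row_eq {f} {σ : Equiv.Perm (Fin d)} (hσ : w ∘ σ = f) (z : W k m n d) :
      row f z = h ((wordRel k w).mkQ (act k σ⁻¹ z)) := by
    have hf : f ∈ wordOrbit w := mem_wordOrbit.2 ⟨σ, hσ⟩
    have comp_eq : w ∘ ⇑(σ * (τ f)⁻¹) = w := by
      rw [Equiv.Perm.coe_mul, ← Function.comp_assoc, hσ]
      exact ((τ f).comp_symm_eq w f).2 (hτ f hf).symm
    rw [← mkQ_wordRel_act_of_comp_eq comp_eq, act_act, inv_mul_cancel_left]
    simp only [row, if_pos hf, LinearMap.comp_apply, LinearMap.restrictScalars_apply]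
  have row_equivariant (σ : Equiv.Perm (Fin d)) (f) (z : W k m n d) :
      row f (act k σ z) =
        (-1) ^ signExp σ (fun i => bpar (f (σ⁻¹ i))) * row (f ∘ ⇑σ⁻¹) z := by
    by_cases hf : f ∈ wordOrbit w
    · obtain ⟨ρ, rfl⟩ := mem_wordOrbit.1 hf
      rw [row_eq rfl, act_act, row_eq (f := (w ∘ ρ) ∘ ⇑σ⁻¹) (σ := ρ * σ⁻¹) rfl,
        mul_inv_rev, inv_inv]
      simp [signExp, hw]
    · simp [row, hf, comp_mem_wordOrbit]
  refine ⟨SAlg.ofRows row row_equivariant, fun z => ?_⟩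
  rw [SAlg.wordCoeff_ofRows_smul, row_eq (f := w) (σ := 1) rfl, inv_one,
    mkQ_wordRel_act_of_comp_eq rfl]

theorem isDualOfRightIdeal_weightIdem {w : Fin d → BIdx m n} (hw : ∀ i, bpar (w i) = false) :
    IsDualOfRightIdeal (weightIdem k w) (weightFunctional (k := k) hw) where
  apply_smul t := by
    obtain ⟨z, rfl⟩ := (wordRel k w).mkQ_surjective t
    rw [← map_smul, weightFunctional_mkQ, weightFunctional_mkQ, wordCoeff_weightIdem_smul,
      if_pos (self_mem_wordOrbit w)]
  exists_apply_smul_eq h := by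
    refine (exists_smul_wordCoeff_eq hw h).imp fun a ha t => ?_
    obtain ⟨z, rfl⟩ := (wordRel k w).mkQ_surjective t
    rw [← map_smul, weightFunctional_mkQ, ha]
  mul_eq_zero a ha := by
    refine SAlg.ext_smul fun z => ext_wordCoeff fun f => ?_
    rw [mul_smul, zero_smul, map_zero, wordCoeff_weightIdem_smul]
    split_ifs with hf
    · obtain ⟨τ, hτ⟩ := mem_wordOrbit.1 hf
      rw [← wordCoeff_act_inv hw hτ, ← smul_act, ← weightFunctional_mkQ hw, map_smul, ha]
    · rfl

theorem subsingleton_ext_wordRel {w : Fin d → BIdx m n} (hw : ∀ i, bpar (w i) = false)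
    {X : Type} [AddCommGroup X] [Module (SAlg k m n d) X] (hX : ∀ x : X, weightIdem k w • x = 0)
    (s : ℕ) :
    Subsingleton (Ext (ModuleCat.of (SAlg k m n d) X)
      (ModuleCat.of (SAlg k m n d) (W k m n d ⧸ wordRel k w)) s) := by
  have := (isDualOfRightIdeal_weightIdem (k := k) hw).injective
  have := Module.injective_object_of_injective_module (SAlg k m n d) (W k m n d ⧸ wordRel k w)
  exact subsingleton_ext_of_injective (fun f => ModuleCat.hom_ext <|
    (isDualOfRightIdeal_weightIdem hw).hom_eq_zero hX f.hom) s

end WeightSpace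

section Vanishing

theorem smul_eq_zero_of_mem_span {A M : Type*} [Semiring A] [AddCommMonoid M] [Module A M] {e : A}
    {s : Set M} (h : ∀ c : A, ∀ x ∈ s, e • c • x = 0) {x : M} (hx : x ∈ Submodule.span A s) :
    e • x = 0 := by
  induction hx using Submodule.closure_induction with
  | zero => exact smul_zero e
  | add x y _ _ hx hy => rw [smul_add, hx, hy, add_zero]
  | smul_mem c x hx => exact h c x hx

variable {k m n d}

variable (k) in
/-- The standard basis tensor of the tensor space at the word `f`. -/
def basisTensor (f : Fin d → BIdx m n) : W k m n d :=
  Pi.single f 1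

theorem wordCoeff_basisTensor (f g : Fin d → BIdx m n) :
    wordCoeff k g (basisTensor k f) = if g = f then 1 else 0 :=
  Pi.single_apply f 1 g

theorem act_basisTensor_of_even {w : Fin d → BIdx m n} (hw : ∀ i, bpar (w i) = false)
    (τ : Equiv.Perm (Fin d)) : act k τ (basisTensor k w) = basisTensor k (w ∘ τ) := by
  refine ext_wordCoeff fun g => ?_
  rw [wordCoeff_act, wordCoeff_basisTensor, wordCoeff_basisTensor]
  by_cases h : g = w ∘ τ
  · subst h
    simp [signExp, hw, Function.comp_assoc]
  · have comp_inv_ne : g ∘ ⇑τ⁻¹ ≠ w := fun h_eq => h ((τ.comp_symm_eq w g).1 h_eq)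
    rw [if_neg comp_inv_ne, if_neg h, mul_zero]

theorem weightIdem_smul_of_act_eq_self {w : Fin d → BIdx m n} (hw : ∀ i, bpar (w i) = false)
    {z : W k m n d} (hz : ∀ σ, act k σ z = z) :
    weightIdem k w • z = ∑ f ∈ wordOrbit w, wordCoeff k w z • basisTensor k f := by
  refine ext_wordCoeff fun f => ?_
  rw [wordCoeff_weightIdem_smul, map_sum]
  simp only [map_smul, wordCoeff_basisTensor, smul_eq_mul, mul_ite, mul_one, mul_zero,
    Finset.sum_ite_eq]
  refine if_ctx_congr Iff.rfl (fun hf => ?_) fun _ => rfl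
  obtain ⟨τ, hτ⟩ := mem_wordOrbit.1 hf
  rw [← wordCoeff_act_inv hw hτ, hz]

theorem weightIdem_smul_mem_symRel {w : Fin d → BIdx m n} (hw : ∀ i, bpar (w i) = false)
    (hcard : (#(wordOrbit w) : k) = 0) {z : W k m n d} (hz : ∀ σ, act k σ z = z) :
    weightIdem k w • z ∈ symRel k m n d := by
  have sub_mem : ∀ f ∈ wordOrbit w, basisTensor k w - basisTensor k f ∈ symRel k m n d := by
    intro f hf
    obtain ⟨τ, rfl⟩ := mem_wordOrbit.1 hf
    rw [← act_basisTensor_of_even hw]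
    exact Submodule.subset_span ⟨_, τ, rfl⟩
  have smul_eq : weightIdem k w • z =
      -∑ f ∈ wordOrbit w, wordCoeff k w z • (basisTensor k w - basisTensor k f) := by
    rw [weightIdem_smul_of_act_eq_self hw hz, ← Finset.smul_sum, ← Finset.smul_sum,
      Finset.sum_sub_distrib, Finset.sum_const, ← Nat.cast_smul_eq_nsmul k, hcard, zero_smul,
      zero_sub, smul_neg, neg_neg]
  rw [smul_eq]
  exact neg_mem <| sum_mem fun f hf => Submodule.smul_of_tower_mem _ _ (sub_mem f hf)

theorem weightIdem_smul_M0_eq_zero {w : Fin d → BIdx m n} (hw : ∀ i, bpar (w i) = false)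
    (hcard : (#(wordOrbit w) : k) = 0) (x : M0 k m n d) : weightIdem k w • x = 0 := by
  refine Subtype.ext (smul_eq_zero_of_mem_span ?_ x.2)
  rintro c _ ⟨v, hv, rfl⟩
  exact (Submodule.Quotient.mk_eq_zero _).2 <| weightIdem_smul_mem_symRel hw hcard fun σ => by
    rw [← smul_act, act_tpow_of_isEven hv]

theorem weightIdem_smul_eq_zero_of_act_eq_sign_smul (h2 : (2 : k) ≠ 0) {w : Fin d → BIdx m n}
    (hw : ∀ i, bpar (w i) = false) (hinj : ¬Function.Injective w) {z : W k m n d}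
    (hz : ∀ σ, act k σ z = ((Equiv.Perm.sign σ : ℤ) : k) • z) : weightIdem k w • z = 0 := by
  obtain ⟨i, j, hij, hne⟩ := Function.not_injective_iff.1 hinj
  have comp_swap : w ∘ Equiv.swap i j = w := by
    rw [Equiv.comp_swap_eq_update, hij, Function.update_eq_self, ← hij, Function.update_eq_self]
  have coeff_eq_neg : wordCoeff k w z = -wordCoeff k w z := by
    conv_lhs => rw [← wordCoeff_act_inv hw comp_swap, hz]
    simp [Equiv.Perm.sign_swap hne]
  have coeff_eq_zero : wordCoeff k w z = 0 := by
    have two_mul_coeff : 2 * wordCoeff k w z = 0 := by linear_combination coeff_eq_neg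
    exact (mul_eq_zero.1 two_mul_coeff).resolve_left h2
  refine ext_wordCoeff fun f => ?_
  rw [wordCoeff_weightIdem_smul, map_zero]
  split_ifs with hf
  · obtain ⟨τ, hτ⟩ := mem_wordOrbit.1 hf
    rw [← wordCoeff_act_inv hw hτ, hz, map_smul, coeff_eq_zero, smul_zero]
  · rfl

theorem weightIdem_smul_M1_eq_zero (h2 : (2 : k) ≠ 0) {w : Fin d → BIdx m n}
    (hw : ∀ i, bpar (w i) = false) (hinj : ¬Function.Injective w) (x : M1 k m n d) :
    weightIdem k w • x = 0 := by
  refine Subtype.ext (smul_eq_zero_of_mem_span ?_ x.2)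
  rintro c _ ⟨v, hv, rfl⟩
  refine weightIdem_smul_eq_zero_of_act_eq_sign_smul h2 hw hinj fun σ => ?_
  rw [← smul_act, act_tpow_of_isOdd hv, smul_comm]

end Vanishing

section TwoLetterWord

variable {d} {α : Type*}

theorem exists_perm_mem_iff_mem [Finite α] {s t : Finset α} (h : #t = #s) :
    ∃ σ : Equiv.Perm α, ∀ i, σ i ∈ s ↔ i ∈ t := by
  classical
  let e : {i // i ∈ t} ≃ {i // i ∈ s} := Finset.equivOfCardEq h
  exact ⟨e.extendSubtype, fun i =>
    ⟨not_imp_not.1 (e.extendSubtype_not_mem i), e.extendSubtype_mem i⟩⟩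

/-- The word with the letter `x` in the slots belonging to `s` and the letter `y` elsewhere. -/
def twoLetterWord (x y : α) (s : Finset (Fin d)) : Fin d → α :=
  fun i => if i ∈ s then x else y

theorem twoLetterWord_comp_eq_iff {x y : α} (hxy : x ≠ y) {s t : Finset (Fin d)}
    {σ : Equiv.Perm (Fin d)} :
    twoLetterWord x y s ∘ σ = twoLetterWord x y t ↔ ∀ i, σ i ∈ s ↔ i ∈ t := by
  rw [funext_iff]
  refine forall_congr' fun i => ?_
  by_cases hs : σ i ∈ s <;> by_cases ht : i ∈ t <;>
    simp [twoLetterWord, hs, ht, hxy, hxy.symm]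

theorem twoLetterWord_injective {x y : α} (hxy : x ≠ y) :
    Function.Injective (twoLetterWord (d := d) x y) := fun _ _ h =>
  Finset.ext ((twoLetterWord_comp_eq_iff (σ := 1) hxy).1 h)

theorem not_injective_twoLetterWord (hd : 3 ≤ d) (x y : α) (s : Finset (Fin d)) :
    ¬Function.Injective (twoLetterWord x y s) := by
  obtain ⟨i, j, hne, hij⟩ :=
    Fintype.exists_ne_map_eq_of_card_lt (fun i : Fin d => decide (i ∈ s))
      (by rwa [Fintype.card_bool, Fintype.card_fin])
  refine Function.not_injective_iff.2 ⟨i, j, ?_, hne⟩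
  simp only [twoLetterWord, decide_eq_decide.1 hij]

variable {k m n} {x y : BIdx m n}

theorem bpar_twoLetterWord (hx : bpar x = false) (hy : bpar y = false) (s : Finset (Fin d))
    (i : Fin d) : bpar (twoLetterWord x y s i) = false := by
  unfold twoLetterWord
  split_ifs
  exacts [hx, hy]

theorem wordOrbit_twoLetterWord (hxy : x ≠ y) (s : Finset (Fin d)) :
    wordOrbit (twoLetterWord x y s) =
      (Finset.univ.powersetCard #s).image (twoLetterWord x y) := by
  ext f
  simp only [mem_wordOrbit, Finset.mem_image, Finset.mem_powersetCard_univ]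
  constructor
  · rintro ⟨σ, rfl⟩
    refine ⟨s.map σ.symm.toEmbedding, Finset.card_map _, Eq.symm ?_⟩
    exact (twoLetterWord_comp_eq_iff hxy).2 fun i => by simp
  · rintro ⟨t, ht, rfl⟩
    exact (exists_perm_mem_iff_mem ht).imp fun σ hσ => (twoLetterWord_comp_eq_iff hxy).2 hσ

theorem card_wordOrbit_twoLetterWord (hxy : x ≠ y) (s : Finset (Fin d)) :
    #(wordOrbit (twoLetterWord x y s)) = d.choose #s := by
  rw [wordOrbit_twoLetterWord hxy, Finset.card_image_of_injective _ (twoLetterWord_injective hxy),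
    Finset.card_powersetCard, Finset.card_univ, Fintype.card_fin]

theorem youngRel_eq_wordRel (hxy : x ≠ y) (a : ℕ) :
    youngRel k m n d a = wordRel k (twoLetterWord x y {i : Fin d | (i : ℕ) < a}) := by
  simp only [youngRel, wordRel, InYoung, twoLetterWord_comp_eq_iff hxy, Finset.mem_filter_univ]

theorem subsingleton_ext_youngQcat (hxy : x ≠ y) (hx : bpar x = false) (hy : bpar y = false)
    {a : ℕ} {X : Type} [AddCommGroup X] [Module (SAlg k m n d) X]
    (hX : ∀ z : X, weightIdem k (twoLetterWord x y {i : Fin d | (i : ℕ) < a}) • z = 0) (s : ℕ) :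
    Subsingleton (Ext (ModuleCat.of (SAlg k m n d) X) (YoungQcat k m n d a) s) := by
  have vanishing := subsingleton_ext_wordRel (bpar_twoLetterWord hx hy _) hX s
  rw [← youngRel_eq_wordRel hxy] at vanishing
  exact vanishing

end TwoLetterWord

theorem statement12_general (k : Type) [Field k] (m n d a : ℕ) (hm : 2 ≤ m) (s : ℕ) :
    (a ≤ d → (d.choose a : k) = 0 →
      Subsingleton (Ext (M0cat k m n d) (YoungQcat k m n d a) s)) ∧
    ((2 : k) ≠ 0 → 3 ≤ d →
      Subsingleton (Ext (M1cat k m n d) (YoungQcat k m n d a) s)) := by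
  let x : Fin m := ⟨0, by lia⟩
  let y : Fin m := ⟨1, hm⟩
  have hxy : (Sum.inl x : BIdx m n) ≠ Sum.inl y := by simp [x, y]
  refine ⟨fun had hchoose => ?_, fun h2 hd => ?_⟩
  · have card_block : #{i : Fin d | (i : ℕ) < a} = a := by simp [Fin.card_filter_val_lt, had]
    refine subsingleton_ext_youngQcat hxy rfl rfl
      (weightIdem_smul_M0_eq_zero (bpar_twoLetterWord rfl rfl _) ?_) s
    rwa [card_wordOrbit_twoLetterWord hxy, card_block]
  · exact subsingleton_ext_youngQcat hxy rfl rfl (weightIdem_smul_M1_eq_zero h2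
      (bpar_twoLetterWord rfl rfl _) (not_injective_twoLetterWord hd _ _ _)) s

theorem statement12 (k : Type) [Field k] (p : ℕ) [Fact p.Prime] [CharP k p] [ExpChar k p]
    [PerfectRing k p] (hp2 : 2 < p) (r : ℕ) (hr : 1 ≤ r) (m n : ℕ)
    (hm : p ^ r ≤ m) (hn : p ^ r ≤ n) (a b : ℕ) (ha : 1 ≤ a) (hb : 1 ≤ b)
    (hab : a + b = p ^ r) (s : ℕ) :
    Subsingleton (Ext (M0cat k m n (p ^ r)) (YoungQcat k m n (p ^ r) a) s) ∧
    Subsingleton (Ext (M1cat k m n (p ^ r)) (YoungQcat k m n (p ^ r) a) s) := by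
  have hd : 3 ≤ p ^ r := hp2.trans_le (Nat.le_self_pow (by lia) p)
  have hchoose : ((p ^ r).choose a : k) = 0 := (CharP.cast_eq_zero_iff k p _).2 <|
    (Fact.out : p.Prime).dvd_choose_pow (by lia) (by lia)
  have h2 : (2 : k) ≠ 0 := Ring.two_ne_zero (by rw [ringChar.eq k p]; lia)
  have general := statement12_general k m n (p ^ r) a (by lia) s
  exact ⟨general.1 (by lia) hchoose, general.2 h2 hd⟩

end Stmt12
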